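/- Let m be a positive integer and let p, q be natural numbers with p + q > 0. Let ω be a smooth map from ℝ^m to the space of alternating q-linear forms on ℝ^m that is positively homogeneous of degree p, i.e. ω(c·z) = c^p · ω(z) for all c > 0 and z ∈ ℝ^m. Define (δω)(z) = Σ_{α=1}^{m} e^α ∧ (∂ω/∂z^α)(z), and define (δ⁻¹η)(z) = (1/(p'+q')) · ι_z(η(z)) for η a q'-form-valued map homogeneous of degree p' with p'+q' > 0 (and δ⁻¹η = 0 when p' = q' = 0), where ι_z denotes insertion of the vector z into the first argument of an alternating form. Then δ(δ⁻¹ω) + δ⁻¹(δω) = ω. -/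

import Mathlib

/-- Raw (unbundled) representation of the values of differential forms on `ℝ^m`:
functions of an infinite sequence of vector arguments.  A `q`-form is such a
function depending only on the first `q` arguments, multilinearly and
alternatingly (this is imposed by hypotheses in the theorem below). -/
abbrev RawForm (m : ℕ) := (ℕ → (Fin m → ℝ)) → ℝ

/-- Wedge product of a 1-form `f` with a `q`-form `A` (deletion formula):
`(f ∧ A)(v₀,…,v_q) = ∑ i (-1)^i f(v_i) A(v₀,…,v̂_i,…,v_q)`. -/
def wedge1 {m : ℕ} (q : ℕ) (f : (Fin m → ℝ) → ℝ) (A : RawForm m) : RawForm m :=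
  fun v => ∑ i : Fin (q + 1),
    (-1 : ℝ) ^ (i : ℕ) * f (v (i : ℕ)) *
      A (fun n => if n < (i : ℕ) then v n else v (n + 1))

/-- The Fedosov operator `δ` acting on a `q`-form-valued map `ω` on `ℝ^m`:
`(δω)(z) = ∑ α e^α ∧ (∂ω/∂z^α)(z)`, where `e^1,…,e^m` is the dual basis of the
standard basis of `ℝ^m` and `∂ω/∂z^α` is the partial derivative of `ω` in the
direction of the `α`-th standard basis vector. -/
noncomputable def deltaOp {m : ℕ} (q : ℕ) (ω : (Fin m → ℝ) → RawForm m) :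
    (Fin m → ℝ) → RawForm m :=
  fun z => ∑ a : Fin m,
    wedge1 q (fun w => w a)
      (fun v => fderiv ℝ (fun y => ω y v) z (Pi.single a 1))

/-- Insertion `ι_z` of the vector `z` into the first argument of a
(degree-`q`) form; on `0`-forms there is no argument to insert into, and the
contraction is zero. -/
def iota {m : ℕ} (q : ℕ) (z : Fin m → ℝ) (A : RawForm m) : RawForm m :=
  if q = 0 then 0 else fun v => A (fun n => if n = 0 then z else v (n - 1))

/-!
Contraction with `z` is contraction with the Euler vector field, and `δ` is the exterior
derivative, so Cartan's formula identifies `δ ι_z + ι_z δ` with the Lie derivative along the Euler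
field. That Lie derivative acts on coefficients as `∂_z`, which is `p` on functions homogeneous of
degree `p`, and contributes `q` from the `q` form slots; dividing by `p + q` gives the identity.

Cartan's formula itself comes from the product rule, which splits `∂_{v i}` of `y ↦ ι_y (ω y)` into
`ω` with `v i` moved to its front slot, which is `± ω v` and accounts for `q ω`, and terms with
frozen contraction vector `z`, which cancel against those in which `ι_z δω` differentiates in the
direction of a form argument.
-/

theorem fderiv_apply_self_of_homogeneous {E F : Type*} [NormedAddCommGroup E] [NormedSpace ℝ E]
    [NormedAddCommGroup F] [NormedSpace ℝ F] {f : E → F} {p : ℝ} {z : E}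
    (hf : DifferentiableAt ℝ f z) (hhom : ∀ c : ℝ, 0 < c → f (c • z) = c ^ p • f z) :
    fderiv ℝ f z z = p • f z := by
  have hray : HasDerivAt (fun c : ℝ => c • z) z 1 := by
    simpa using (hasDerivAt_id (1 : ℝ)).smul_const z
  have hchain : HasDerivAt (fun c : ℝ => f (c • z)) (fderiv ℝ f z z) 1 :=
    HasFDerivAt.comp_hasDerivAt (1 : ℝ) (by simpa using hf.hasFDerivAt) hray
  have hpow : HasDerivAt (fun c : ℝ => c ^ p • f z) (p • f z) 1 := by
    simpa using (Real.hasDerivAt_rpow_const (p := p) (Or.inl one_ne_zero)).smul_const (f z)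
  refine hchain.unique (hpow.congr_of_eventuallyEq ?_)
  filter_upwards [lt_mem_nhds zero_lt_one] with c hc using hhom c hc

theorem fderiv_diag_of_isLinearMap {𝕜 E F : Type*} [NontriviallyNormedField 𝕜] [CompleteSpace 𝕜]
    [NormedAddCommGroup E] [NormedSpace 𝕜 E] [FiniteDimensional 𝕜 E] [NormedAddCommGroup F]
    [NormedSpace 𝕜 F] {g : E → E → F} {z : E} (hlin : ∀ y, IsLinearMap 𝕜 (g y))
    (hdiff : ∀ x, DifferentiableAt 𝕜 (fun y => g y x) z) (u : E) :
    fderiv 𝕜 (fun y => g y y) z u = g z u + fderiv 𝕜 (fun y => g y z) z u := by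
  let b := Module.finBasis 𝕜 E
  let coord i : E →L[𝕜] 𝕜 := (b.coord i).toContinuousLinearMap
  have hexpand (y x : E) : g y x = ∑ i, coord i x • g y (b i) := by
    conv_lhs => rw [← b.sum_repr x]
    exact (map_sum ((hlin y).mk' (g y)) _ _).trans
      (Finset.sum_congr rfl fun i _ => (hlin y).map_smul _ _)
  have hdiag : HasFDerivAt (fun y => g y y)
      (∑ i, (coord i z • fderiv 𝕜 (fun y => g y (b i)) z + (coord i).smulRight (g z (b i)))) z := by
    simp only [fun y => hexpand y y]
    exact HasFDerivAt.fun_sum fun i _ => (coord i).hasFDerivAt.smul (hdiff (b i)).hasFDerivAt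
  have hfrozen : HasFDerivAt (fun y => g y z)
      (∑ i, coord i z • fderiv 𝕜 (fun y => g y (b i)) z) z := by
    simp only [fun y => hexpand y z]
    exact HasFDerivAt.fun_sum fun i _ => (hdiff (b i)).hasFDerivAt.const_smul (coord i z)
  rw [hdiag.fderiv, hfrozen.fderiv, hexpand z u]
  simp [Finset.sum_add_distrib, add_comm]

section Arguments

variable {α : Type*}

/-- The sequence of arguments `(x, v₀, v₁, …)`, in the form in which `iota` feeds it to a form. -/
def consArg (x : α) (v : ℕ → α) : ℕ → α :=
  fun n => if n = 0 then x else v (n - 1)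

/-- The sequence of arguments `(v₀, …, v̂ᵢ, …)`, in the form in which `wedge1` feeds it to a
form. -/
def deleteArg (i : ℕ) (v : ℕ → α) : ℕ → α :=
  fun n => if n < i then v n else v (n + 1)

theorem deleteArg_zero_consArg (x : α) (v : ℕ → α) : deleteArg 0 (consArg x v) = v := by
  funext n
  simp [deleteArg, consArg]

theorem deleteArg_succ_consArg (i : ℕ) (x : α) (v : ℕ → α) :
    deleteArg (i + 1) (consArg x v) = consArg x (deleteArg i v) := by
  funext n
  cases n <;> simp [deleteArg, consArg]

theorem consArg_comp_val (k : ℕ) (x : α) (v : ℕ → α) :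
    (fun j : Fin (k + 1) => consArg x v j) = Matrix.vecCons x fun j : Fin k => v j := by
  funext j
  cases j using Fin.cases <;> simp [consArg]

theorem deleteArg_comp_val {k : ℕ} (i : Fin (k + 1)) (v : ℕ → α) :
    (fun j : Fin k => deleteArg i v j) = i.removeNth fun j : Fin (k + 1) => v j := by
  funext j
  simp only [deleteArg, Fin.removeNth, Fin.succAbove, Fin.lt_def, Fin.val_castSucc]
  split_ifs <;> rfl

end Arguments

variable {m : ℕ}

/-- `B` is the raw representation of an alternating `q`-form on `ℝ^m`: it reads only its first `q`
arguments, through an alternating map. -/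
def RawForm.IsAlternating (q : ℕ) (B : RawForm m) : Prop :=
  ∃ A : AlternatingMap ℝ (Fin m → ℝ) ℝ (Fin q), ∀ v, B v = A fun i : Fin q => v i

namespace RawForm.IsAlternating

variable {k : ℕ} {B : RawForm m}

theorem isLinearMap_consArg (hB : B.IsAlternating (k + 1)) (w : ℕ → Fin m → ℝ) :
    IsLinearMap ℝ fun x => B (consArg x w) := by
  obtain ⟨A, hA⟩ := hB
  simp only [hA, consArg_comp_val]
  exact ⟨A.map_vecCons_add _, A.map_vecCons_smul _⟩

theorem neg_one_pow_mul_consArg_deleteArg (hB : B.IsAlternating (k + 1)) (v : ℕ → Fin m → ℝ)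
    (i : Fin (k + 1)) : (-1 : ℝ) ^ (i : ℕ) * B (consArg (v i) (deleteArg i v)) = B v := by
  obtain ⟨A, hA⟩ := hB
  have hinsert : i.insertNth (v i) (i.removeNth fun j => v j) = fun j : Fin (k + 1) => v j :=
    i.insertNth_self_removeNth fun j => v j
  rw [hA, hA, consArg_comp_val, deleteArg_comp_val, ← A.neg_one_pow_smul_map_insertNth, hinsert]
  simp [← mul_assoc, ← mul_pow]

end RawForm.IsAlternating

theorem iota_zero (z : Fin m → ℝ) (A : RawForm m) : iota 0 z A = 0 :=
  if_pos rfl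

theorem iota_succ_apply (q : ℕ) (z : Fin m → ℝ) (A : RawForm m) (v : ℕ → Fin m → ℝ) :
    iota (q + 1) z A v = A (consArg z v) :=
  rfl

theorem deltaOp_apply (q : ℕ) (ω : (Fin m → ℝ) → RawForm m) (z : Fin m → ℝ)
    (v : ℕ → Fin m → ℝ) :
    deltaOp q ω z v = ∑ i : Fin (q + 1),
      (-1 : ℝ) ^ (i : ℕ) * fderiv ℝ (fun y => ω y (deleteArg i v)) z (v i) := by
  simp only [deltaOp, wedge1, Finset.sum_apply]
  rw [Finset.sum_comm]
  refine Finset.sum_congr rfl fun i _ => ?_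
  conv_rhs => rw [pi_eq_sum_univ' (v i), map_sum, Finset.mul_sum]
  refine Finset.sum_congr rfl fun a _ => ?_
  rw [map_smul, smul_eq_mul, mul_assoc]
  rfl

theorem deltaOp_const_smul (q : ℕ) (c : ℝ) (ω : (Fin m → ℝ) → RawForm m) (z : Fin m → ℝ) :
    deltaOp q (fun y => c • ω y) z = c • deltaOp q ω z := by
  funext v
  have hfderiv (w : ℕ → Fin m → ℝ) :
      fderiv ℝ (fun y => (c • ω y) w) z = c • fderiv ℝ (fun y => ω y w) z :=
    congrFun (fderiv_const_smul_field c) z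
  rw [Pi.smul_apply, smul_eq_mul, deltaOp_apply, deltaOp_apply, Finset.mul_sum]
  refine Finset.sum_congr rfl fun i _ => ?_
  rw [hfderiv, smul_apply, smul_eq_mul, mul_left_comm]

theorem deltaOp_iota_succ_apply {q : ℕ} {ω : (Fin m → ℝ) → RawForm m} {z : Fin m → ℝ}
    (hform : ∀ y, (ω y).IsAlternating (q + 1))
    (hdiff : ∀ v, DifferentiableAt ℝ (fun y => ω y v) z) (v : ℕ → Fin m → ℝ) :
    deltaOp q (fun y => iota (q + 1) y (ω y)) z v = (q + 1) * ω z v + ∑ i : Fin (q + 1),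
      (-1 : ℝ) ^ (i : ℕ) * fderiv ℝ (fun y => ω y (consArg z (deleteArg i v))) z (v i) := by
  have hproduct (i : Fin (q + 1)) :
      fderiv ℝ (fun y => ω y (consArg y (deleteArg i v))) z (v i) =
        ω z (consArg (v i) (deleteArg i v)) +
          fderiv ℝ (fun y => ω y (consArg z (deleteArg i v))) z (v i) :=
    fderiv_diag_of_isLinearMap (fun y => (hform y).isLinearMap_consArg _) (fun _ => hdiff _) (v i)
  simp only [deltaOp_apply, iota_succ_apply, hproduct, mul_add, Finset.sum_add_distrib,
    (hform z).neg_one_pow_mul_consArg_deleteArg]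
  simp

theorem iota_deltaOp_apply (q : ℕ) (ω : (Fin m → ℝ) → RawForm m) (z : Fin m → ℝ)
    (v : ℕ → Fin m → ℝ) :
    iota (q + 1) z (deltaOp q ω z) v = fderiv ℝ (fun y => ω y v) z z - ∑ i : Fin q,
      (-1 : ℝ) ^ (i : ℕ) * fderiv ℝ (fun y => ω y (consArg z (deleteArg i v))) z (v i) := by
  rw [iota_succ_apply, deltaOp_apply, Fin.sum_univ_succ]
  simp only [Fin.val_zero, Fin.val_succ, deleteArg_zero_consArg, deleteArg_succ_consArg]
  simp [consArg, pow_succ, sub_eq_add_neg]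

theorem deltaOp_iota_add_iota_deltaOp {q : ℕ} {ω : (Fin m → ℝ) → RawForm m} {z : Fin m → ℝ}
    (hform : ∀ y, (ω y).IsAlternating q) (hdiff : ∀ v, DifferentiableAt ℝ (fun y => ω y v) z)
    (v : ℕ → Fin m → ℝ) :
    deltaOp (q - 1) (fun y => iota q y (ω y)) z v + iota (q + 1) z (deltaOp q ω z) v =
      fderiv ℝ (fun y => ω y v) z z + q * ω z v := by
  cases q with
  | zero => simp [iota_deltaOp_apply, iota_zero, deltaOp_apply]
  | succ q =>
    rw [Nat.add_sub_cancel, deltaOp_iota_succ_apply hform hdiff, iota_deltaOp_apply]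
    push_cast
    ring

theorem deltaOp_deltaInv_add_deltaInv_deltaOp_general {q : ℕ} {p : ℝ} (hpq : p + q ≠ 0)
    {ω : (Fin m → ℝ) → RawForm m} {z : Fin m → ℝ}
    (hdiff : ∀ v, DifferentiableAt ℝ (fun y => ω y v) z)
    (hform : ∀ y, (ω y).IsAlternating q)
    (hhom : ∀ c : ℝ, 0 < c → ∀ v, ω (c • z) v = c ^ p * ω z v) (v : ℕ → Fin m → ℝ) :
    deltaOp (q - 1) (fun y => (p + q)⁻¹ • iota q y (ω y)) z v
        + (p + q)⁻¹ * iota (q + 1) z (deltaOp q ω z) v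
      = ω z v := by
  have heuler : fderiv ℝ (fun y => ω y v) z z = p * ω z v :=
    fderiv_apply_self_of_homogeneous (hdiff v) fun c hc => hhom c hc v
  rw [deltaOp_const_smul, Pi.smul_apply, smul_eq_mul, ← mul_add,
    deltaOp_iota_add_iota_deltaOp hform hdiff, heuler, ← add_mul, inv_mul_cancel_left₀ hpq]

/-- **The Fedosov homotopy identity `δ δ⁻¹ + δ⁻¹ δ = id`.**
Let `ω` be a smooth alternating-`q`-form-valued map on `ℝ^m` which is
positively homogeneous of degree `p` in `z`, with `p + q > 0`.  With
`(δ⁻¹η)(z) = (1/(p'+q')) ι_z(η(z))` on maps of symmetric degree `p'` and form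
degree `q'` (so the factor `1/(p+q)` is used both for `ω`, of bidegree
`(p, q)`, and for `δω`, of bidegree `(p-1, q+1)`), one has
`δ(δ⁻¹ω) + δ⁻¹(δω) = ω`. -/
theorem deltaOp_deltaInv_add_deltaInv_deltaOp (m p q : ℕ) (hm : 0 < m)
    (hpq : 0 < p + q)
    (ω : (Fin m → ℝ) → RawForm m)
    (hsmooth : ∀ v, ContDiff ℝ (⊤ : ℕ∞) fun z => ω z v)
    (hform : ∀ z, ∃ A : AlternatingMap ℝ (Fin m → ℝ) ℝ (Fin q),
      ∀ v, ω z v = A fun i : Fin q => v (i : ℕ))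
    (hhom : ∀ c : ℝ, 0 < c → ∀ z v, ω (c • z) v = c ^ p * ω z v) :
    ∀ z v, deltaOp (q - 1) (fun z' => (p + q : ℝ)⁻¹ • iota q z' (ω z')) z v
        + (p + q : ℝ)⁻¹ * iota (q + 1) z (deltaOp q ω z) v
      = ω z v := by
  intro z v
  exact deltaOp_deltaInv_add_deltaInv_deltaOp_general (mod_cast hpq.ne')
    (fun v => (hsmooth v).differentiable (by simp) z) hform
    (fun c hc v => by simpa using hhom c hc z v) v
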